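/- Let A be an associative unital algebra over a field F, q ∈ F nonzero with (q-q^{-1})(q^2-q^{-2}) ≠ 0, and let A₀, X ∈ A satisfy the q-Dolan/Grady relation A₀^3 X - [3]_q A₀^2 X A₀ + [3]_q A₀ X A₀^2 - X A₀^3 = (q^2-q^{-2})^2 (X A₀ - A₀ X), where [3]_q = q^2+q^{-2}+1. Define L(X) = X + (q A₀^2 X - (q+q^{-1}) A₀ X A₀ + q^{-1} X A₀^2)/((q-q^{-1})(q^2-q^{-2})) and M(X) = X + (q^{-1} A₀^2 X - (q+q^{-1}) A₀ X A₀ + q X A₀^2)/((q-q^{-1})(q^2-q^{-2})). Then M(L(X)) = X and L(M(X)) = X, where M and L are extended by the same formulas (note L(X) and M(X) again satisfy the same q-Dolan/Grady relation with A₀). -/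

import Mathlib

/-- The `q`-Dolan/Grady operator `Z ↦ a³Z - [3] a²Za + [3] aZa² - Za³`. -/
def qDolanGrady {F : Type*} [Field F] (q : F) {A : Type*} [Ring A] [Algebra F A] (a Z : A) : A :=
  a^3 * Z - (q^2 + q⁻¹^2 + 1) • (a^2 * Z * a) + (q^2 + q⁻¹^2 + 1) • (a * Z * a^2) - Z * a^3

/-- Composing the two maps `Z ↦ Z + c (a(qaZ - q⁻¹Za) - (qaZ - q⁻¹Za)a)` for `q = s` and `q = t`,
where `t` and `s` are mutually inverse. -/
theorem qDolanGrady_comp {F : Type*} [Field F] {s t : F} (hst : t * s = 1)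
    {A : Type*} [Ring A] [Algebra F A] (c : F) (a X Y : A)
    (hY : Y = X + c • (s • (a^2 * X) - (s + t) • (a * X * a) + t • (X * a^2))) :
    Y + c • (t • (a^2 * Y) - (s + t) • (a * Y * a) + s • (Y * a^2))
      = X + (c * (s + t)) • (a * (a * X - X * a) - (a * X - X * a) * a)
        + (c^2) • (a * qDolanGrady s a X - qDolanGrady s a X * a) := by
  have hs : s ≠ 0 := right_ne_zero_of_mul_eq_one hst
  obtain rfl : t = s⁻¹ := eq_inv_of_mul_eq_one_left hst
  subst hY
  simp only [qDolanGrady, pow_succ, pow_zero, one_mul, mul_add, add_mul, mul_sub, sub_mul,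
    smul_mul_assoc, mul_smul_comm, mul_assoc]
  match_scalars <;> field_simp <;> ring

theorem stmt_16 {F : Type*} [Field F] (q : F) (hq : q ≠ 0)
    (hq1 : q - q⁻¹ ≠ 0) (hq2 : q^2 - q⁻¹^2 ≠ 0)
    {A : Type*} [Ring A] [Algebra F A] (A₀ X : A)
    (hDG : A₀^3 * X - (q^2 + q⁻¹^2 + 1) • (A₀^2 * X * A₀)
        + (q^2 + q⁻¹^2 + 1) • (A₀ * X * A₀^2) - X * A₀^3
        = (q^2 - q⁻¹^2)^2 • (X * A₀ - A₀ * X)) :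
    let L : A → A := fun Z => Z + ((q - q⁻¹) * (q^2 - q⁻¹^2))⁻¹ •
      (q • (A₀^2 * Z) - (q + q⁻¹) • (A₀ * Z * A₀) + q⁻¹ • (Z * A₀^2))
    let M : A → A := fun Z => Z + ((q - q⁻¹) * (q^2 - q⁻¹^2))⁻¹ •
      (q⁻¹ • (A₀^2 * Z) - (q + q⁻¹) • (A₀ * Z * A₀) + q • (Z * A₀^2))
    M (L X) = X ∧ L (M X) = X := by
  intro L M
  have hD : qDolanGrady q A₀ X = (q^2 - q⁻¹^2)^2 • (X * A₀ - A₀ * X) := hDG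
  have hD' : qDolanGrady q⁻¹ A₀ X = qDolanGrady q A₀ X := by
    simp only [qDolanGrady, inv_inv, add_comm (q⁻¹^2)]
  have hc : ((q - q⁻¹) * (q^2 - q⁻¹^2))⁻¹ * (q + q⁻¹)
      = ((q - q⁻¹) * (q^2 - q⁻¹^2))⁻¹^2 * (q^2 - q⁻¹^2)^2 := by
    generalize q⁻¹ = p at hq1 hq2 ⊢
    field_simp
    ring
  have cancel : X + (((q - q⁻¹) * (q^2 - q⁻¹^2))⁻¹ * (q + q⁻¹)) •
        (A₀ * (A₀ * X - X * A₀) - (A₀ * X - X * A₀) * A₀)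
      + (((q - q⁻¹) * (q^2 - q⁻¹^2))⁻¹^2) •
        (A₀ * qDolanGrady q A₀ X - qDolanGrady q A₀ X * A₀) = X := by
    rw [hc, hD]
    simp only [mul_sub, sub_mul, smul_mul_assoc, mul_smul_comm]
    module
  constructor
  · exact (qDolanGrady_comp (inv_mul_cancel₀ hq) _ A₀ X (L X) rfl).trans cancel
  · have h := qDolanGrady_comp (mul_inv_cancel₀ hq)
      (((q - q⁻¹) * (q^2 - q⁻¹^2))⁻¹) A₀ X (M X) (by rw [add_comm q⁻¹ q])
    rw [add_comm q⁻¹ q, hD'] at h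
    exact h.trans cancel
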